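/- For any UD exchange network instance, a UD solution exists if and only if a stable trade outcome exists, which holds if and only if the LP relaxation of maximum weight matching admits an integral optimum. -/

import Mathlib

namespace EN

open Finset

variable {V : Type*}

/-- The nonnegative part `(x)₊ = max (x, 0)`. -/
noncomputable def pos (x : ℝ) : ℝ := max x 0

variable [Fintype V] [DecidableEq V]

/-- The maximum of `f` over a finite set of vertices (`0` over the empty set). -/
noncomputable def fmax (s : Finset V) (f : V → ℝ) : ℝ := ⨆ k ∈ s, f k

/-- The offer from `i` to `j` given messages `α` and weights `w`:
`m_{i→j} = (w_{ij} − α_{i\j})₊ − (1/2) (w_{ij} − α_{i\j} − α_{j\i})₊`. -/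
noncomputable def offer (w α : V → V → ℝ) (i j : V) : ℝ :=
  pos (w i j - α i j) - (1 / 2) * pos (w i j - α i j - α j i)

/-- The update operator `T` of the natural dynamics:
`(Tα)_{i\j} = max_{k ∈ ∂i \ j} m_{k→i}`. -/
noncomputable def upd (G : SimpleGraph V) [DecidableRel G.Adj] (w α : V → V → ℝ)
    (i j : V) : ℝ :=
  fmax ((G.neighborFinset i).erase j) fun k => offer w α k i

/-- The earnings estimate `γ_i = max_{k ∈ ∂i} m_{k→i}`. -/
noncomputable def earn (G : SimpleGraph V) [DecidableRel G.Adj] (w α : V → V → ℝ)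
    (i : V) : ℝ :=
  fmax (G.neighborFinset i) fun k => offer w α k i

/-- Exchange network weights: symmetric and positive on every edge. -/
def GoodW (G : SimpleGraph V) (w : V → V → ℝ) : Prop :=
  (∀ i j, w i j = w j i) ∧ ∀ i j, G.Adj i j → 0 < w i j

/-- A valid message vector: nonnegative on all directed edges. -/
def ValidMsg (G : SimpleGraph V) (α : V → V → ℝ) : Prop :=
  ∀ i j, G.Adj i j → 0 ≤ α i j

/-- Fixed point of the natural-dynamics update operator. -/
def IsFixedPt (G : SimpleGraph V) [DecidableRel G.Adj] (w α : V → V → ℝ) : Prop :=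
  ∀ i j, G.Adj i j → upd G w α i j = α i j

/-- `ε`-fixed point. -/
def IsEpsFixedPt (G : SimpleGraph V) [DecidableRel G.Adj] (w α : V → V → ℝ) (ε : ℝ) : Prop :=
  ∀ i j, G.Adj i j → |α i j - upd G w α i j| ≤ ε

/-- The natural dynamics with damping factor `κ`: `α^{t+1} = (1−κ) α^t + κ T α^t`. -/
noncomputable def dyn (G : SimpleGraph V) [DecidableRel G.Adj] (w : V → V → ℝ) (κ : ℝ)
    (α0 : V → V → ℝ) : ℕ → V → V → ℝ
  | 0 => α0
  | t + 1 => fun i j =>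
      (1 - κ) * dyn G w κ α0 t i j + κ * upd G w (dyn G w κ α0 t) i j

/-- Sup norm over directed edges. -/
noncomputable def msgSup (G : SimpleGraph V) [DecidableRel G.Adj] (f : V → V → ℝ) : ℝ :=
  ⨆ p : V × V, if G.Adj p.1 p.2 then |f p.1 p.2| else 0

/-- `M` is a matching of `G`: a symmetric subrelation of adjacency pairing each node
with at most one partner. -/
structure IsMatching (G : SimpleGraph V) (M : V → V → Prop) : Prop where
  subset : ∀ i j, M i j → G.Adj i j
  symm : ∀ i j, M i j → M j i
  unique : ∀ i j k, M i j → M i k → j = k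

/-- `(M, γ)` is a trade outcome. -/
def IsOutcome (G : SimpleGraph V) (w : V → V → ℝ) (M : V → V → Prop) (γ : V → ℝ) : Prop :=
  IsMatching G M ∧ (∀ i, 0 ≤ γ i) ∧ (∀ i j, M i j → γ i + γ j = w i j) ∧
    ∀ i, (∀ j, ¬M i j) → γ i = 0

/-- Stability of an outcome. -/
def Stable (G : SimpleGraph V) (w : V → V → ℝ) (M : V → V → Prop) (γ : V → ℝ) : Prop :=
  ∀ i j, G.Adj i j → ¬M i j → w i j ≤ γ i + γ j

/-- The best alternative of `i` excluding `j`: `max_{k ∈ ∂i \ j} (w_{ik} − γ_k)₊`. -/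
noncomputable def bestAlt (G : SimpleGraph V) [DecidableRel G.Adj] (w : V → V → ℝ)
    (γ : V → ℝ) (i j : V) : ℝ :=
  fmax ((G.neighborFinset i).erase j) fun k => pos (w i k - γ k)

/-- Balance of an outcome. -/
def Balanced (G : SimpleGraph V) [DecidableRel G.Adj] (w : V → V → ℝ) (M : V → V → Prop)
    (γ : V → ℝ) : Prop :=
  ∀ i j, M i j → γ i - bestAlt G w γ i j = γ j - bestAlt G w γ j i

/-- Nash bargaining solution: a stable and balanced trade outcome. -/
def IsNBSolution (G : SimpleGraph V) [DecidableRel G.Adj] (w : V → V → ℝ)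
    (M : V → V → Prop) (γ : V → ℝ) : Prop :=
  IsOutcome G w M γ ∧ Stable G w M γ ∧ Balanced G w M γ

/-- `ε`-balance. -/
def EpsBalanced (G : SimpleGraph V) [DecidableRel G.Adj] (w : V → V → ℝ)
    (M : V → V → Prop) (γ : V → ℝ) (ε : ℝ) : Prop :=
  ∀ i j, M i j → |(γ i - bestAlt G w γ i j) - (γ j - bestAlt G w γ j i)| ≤ ε

/-- `ε`-Nash bargaining solution. -/
def IsEpsNB (G : SimpleGraph V) [DecidableRel G.Adj] (w : V → V → ℝ)
    (M : V → V → Prop) (γ : V → ℝ) (ε : ℝ) : Prop :=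
  IsOutcome G w M γ ∧ Stable G w M γ ∧ EpsBalanced G w M γ ε

/-- Feasible point of the LP relaxation of maximum weight matching. -/
def LPFeasible (G : SimpleGraph V) [DecidableRel G.Adj] (x : V → V → ℝ) : Prop :=
  (∀ i j, x i j = x j i) ∧ (∀ i j, 0 ≤ x i j) ∧ (∀ i j, ¬G.Adj i j → x i j = 0) ∧
    ∀ i, ∑ j ∈ G.neighborFinset i, x i j ≤ 1

/-- LP objective `Σ_{(i,j)∈E} w_{ij} x_{ij}` (each undirected edge counted once). -/
noncomputable def LPval (G : SimpleGraph V) [DecidableRel G.Adj] (w x : V → V → ℝ) : ℝ :=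
  (1 / 2) * ∑ i, ∑ j ∈ G.neighborFinset i, w i j * x i j

/-- Optimal point of the LP relaxation of maximum weight matching. -/
def LPOptimal (G : SimpleGraph V) [DecidableRel G.Adj] (w x : V → V → ℝ) : Prop :=
  LPFeasible G x ∧ ∀ y, LPFeasible G y → LPval G w y ≤ LPval G w x

def Integral (x : V → V → ℝ) : Prop := ∀ i j, x i j = 0 ∨ x i j = 1

def HalfIntegral (x : V → V → ℝ) : Prop := ∀ i j, x i j = 0 ∨ x i j = 1 / 2 ∨ x i j = 1

open Classical in
/-- The LP point associated to a matching. -/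
noncomputable def mInd (M : V → V → Prop) (i j : V) : ℝ := if M i j then 1 else 0

/-- The state with offers `m` induces the matching `M`: every node receiving a positive
offer is matched and receives its unique best offer from its partner, and every node
with zero earnings is unmatched. -/
def Induces (G : SimpleGraph V) [DecidableRel G.Adj] (m : V → V → ℝ)
    (M : V → V → Prop) : Prop :=
  IsMatching G M ∧
    (∀ i, (∃ k, G.Adj i k ∧ 0 < m k i) →
      ∃ j, M i j ∧ ∀ k, G.Adj i k → k ≠ j → m k i < m j i) ∧
    ∀ i, (fmax (G.neighborFinset i) fun k => m k i) = 0 → ∀ j, ¬M i j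

/-- Feasibility for the dual LP. -/
def DualFeasible (G : SimpleGraph V) (w : V → V → ℝ) (y : V → ℝ) : Prop :=
  (∀ i, 0 ≤ y i) ∧ ∀ i j, G.Adj i j → w i j ≤ y i + y j

/-- Optimality for the dual LP. -/
def DualOptimal (G : SimpleGraph V) (w : V → V → ℝ) (y : V → ℝ) : Prop :=
  DualFeasible G w y ∧ ∀ z, DualFeasible G w z → ∑ i, y i ≤ ∑ i, z i

/-- The unmatched balance property at every edge. -/
def UnmatchedBalance (G : SimpleGraph V) [DecidableRel G.Adj] (w : V → V → ℝ)
    (y : V → ℝ) : Prop :=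
  ∀ i j, G.Adj i j → y i - bestAlt G w y i j = y j - bestAlt G w y j i

/-! ### Unequal division -/

/-- Valid split fractions: `r_{ij} ∈ (0,1)` with `r_{ij} + r_{ji} = 1` on every edge. -/
def GoodR (G : SimpleGraph V) (r : V → V → ℝ) : Prop :=
  ∀ i j, G.Adj i j → 0 < r i j ∧ r i j < 1 ∧ r i j + r j i = 1

/-- The UD offer from `i` to `j`. -/
noncomputable def offerUD (w r α : V → V → ℝ) (i j : V) : ℝ :=
  pos (w i j - α i j) - r i j * pos (w i j - α i j - α j i)

/-- The UD update operator. -/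
noncomputable def updUD (G : SimpleGraph V) [DecidableRel G.Adj] (w r α : V → V → ℝ)
    (i j : V) : ℝ :=
  fmax ((G.neighborFinset i).erase j) fun k => offerUD w r α k i

/-- The UD earnings estimate. -/
noncomputable def earnUD (G : SimpleGraph V) [DecidableRel G.Adj] (w r α : V → V → ℝ)
    (i : V) : ℝ :=
  fmax (G.neighborFinset i) fun k => offerUD w r α k i

/-- Fixed point of the UD update operator. -/
def IsFixedPtUD (G : SimpleGraph V) [DecidableRel G.Adj] (w r α : V → V → ℝ) : Prop :=
  ∀ i j, G.Adj i j → updUD G w r α i j = α i j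

/-- Correct division. -/
def CorrectDiv (G : SimpleGraph V) [DecidableRel G.Adj] (w r : V → V → ℝ)
    (M : V → V → Prop) (γ : V → ℝ) : Prop :=
  ∀ i j, M i j →
    (1 / r i j) * (γ i - bestAlt G w γ i j) = (1 / r j i) * (γ j - bestAlt G w γ j i)

/-- UD solution: a stable trade outcome satisfying correct division. -/
def IsUDSolution (G : SimpleGraph V) [DecidableRel G.Adj] (w r : V → V → ℝ)
    (M : V → V → Prop) (γ : V → ℝ) : Prop :=
  IsOutcome G w M γ ∧ Stable G w M γ ∧ CorrectDiv G w r M γ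

/-- Edge surplus. -/
noncomputable def surp (G : SimpleGraph V) [DecidableRel G.Adj] (w : V → V → ℝ)
    (γ : V → ℝ) (i j : V) : ℝ :=
  w i j - bestAlt G w γ i j - bestAlt G w γ j i

open Classical in
/-- The rebalanced allocation `γ^reb`. -/
noncomputable def reb (G : SimpleGraph V) [DecidableRel G.Adj] (w r : V → V → ℝ)
    (M : V → V → Prop) (γ : V → ℝ) (i : V) : ℝ :=
  if h : ∃ j, M i j then
    bestAlt G w γ i h.choose + r i h.choose * surp G w γ i h.choose
  else 0

/-- The Edge Rebalancing iteration `γ^{t+1} = κ γ^reb(γ^t) + (1−κ) γ^t`. -/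
noncomputable def rebIter (G : SimpleGraph V) [DecidableRel G.Adj] (w r : V → V → ℝ)
    (M : V → V → Prop) (κ : ℝ) (γ0 : V → ℝ) : ℕ → V → ℝ
  | 0 => γ0
  | t + 1 => fun i =>
      κ * reb G w r M (rebIter G w r M κ γ0 t) i + (1 - κ) * rebIter G w r M κ γ0 t i

theorem sum_swap_aux (G : SimpleGraph V) [DecidableRel G.Adj] (F : V → V → ℝ) :
    ∑ i, ∑ j ∈ G.neighborFinset i, F i j = ∑ i, ∑ j ∈ G.neighborFinset i, F j i := by
  apply Finset.sum_comm'
  intro x y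
  simp [SimpleGraph.mem_neighborFinset, G.adj_comm]

theorem sum_dd (G : SimpleGraph V) [DecidableRel G.Adj] (d : V → ℝ) (c : V → V → ℝ)
    (hc : ∀ i j, c i j = c j i) :
    ∑ i, ∑ j ∈ G.neighborFinset i, (d i + d j) * c i j
      = 2 * ∑ i, d i * ∑ j ∈ G.neighborFinset i, c i j := by
  have h1 : ∑ i, ∑ j ∈ G.neighborFinset i, d j * c i j
      = ∑ i, ∑ j ∈ G.neighborFinset i, d i * c i j := by
    rw [sum_swap_aux]
    refine Finset.sum_congr rfl fun i _ => Finset.sum_congr rfl fun j _ => ?_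
    rw [hc]
  simp only [add_mul, Finset.sum_add_distrib, Finset.mul_sum]
  rw [h1]
  simp only [← Finset.mul_sum]
  ring

theorem pos_nonneg (x : ℝ) : 0 ≤ pos x := le_max_right _ _
theorem le_pos (x : ℝ) : x ≤ pos x := le_max_left _ _

theorem pos_sub_le (x y : ℝ) : |pos x - pos y| ≤ |x - y| := by
  unfold pos
  exact abs_max_sub_max_le_abs x y 0

theorem pos_sq_le (a t : ℝ) : (pos (a - t)) ^ 2 ≤ (pos a) ^ 2 - 2 * t * pos a + t ^ 2 := by
  unfold pos
  rcases le_total a 0 with h | h <;> rcases le_total (a - t) 0 with h' | h' <;>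
    simp only [max_eq_left, max_eq_right, h, h'] <;> nlinarith [sq_nonneg (a - t), sq_nonneg t]

/-- penalised dual objective -/
noncomputable def penF (G : SimpleGraph V) [DecidableRel G.Adj] (w : V → V → ℝ) (ε : ℝ)
    (y : V → ℝ) : ℝ :=
  ∑ i, y i + (1 / (4 * ε)) * ∑ i, ∑ j ∈ G.neighborFinset i, (pos (w i j - y i - y j)) ^ 2

theorem penF_dir (G : SimpleGraph V) [DecidableRel G.Adj] (w : V → V → ℝ)
    (hw : ∀ i j, w i j = w j i) (ε : ℝ) (hε : 0 < ε) (y d : V → ℝ) :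
    penF G w ε (y + d) ≤ penF G w ε y
      + ∑ i, d i * (1 - ∑ j ∈ G.neighborFinset i, pos (w i j - y i - y j) / ε)
      + (1 / (4 * ε)) * ∑ i, ∑ j ∈ G.neighborFinset i, (d i + d j) ^ 2 := by
  have h1 : ∑ i, ∑ j ∈ G.neighborFinset i, (pos (w i j - (y + d) i - (y + d) j)) ^ 2
      ≤ ∑ i, ∑ j ∈ G.neighborFinset i, ((pos (w i j - y i - y j)) ^ 2
        - 2 * ((d i + d j) * pos (w i j - y i - y j)) + (d i + d j) ^ 2) := by
    refine Finset.sum_le_sum fun i _ => Finset.sum_le_sum fun j _ => ?_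
    have := pos_sq_le (w i j - y i - y j) (d i + d j)
    have e : w i j - (y + d) i - (y + d) j = w i j - y i - y j - (d i + d j) := by
      simp only [Pi.add_apply]; ring
    rw [e]; linarith
  simp only [Finset.sum_add_distrib, Finset.sum_sub_distrib, ← Finset.mul_sum] at h1
  rw [sum_dd G d (fun i j => pos (w i j - y i - y j))
    (fun i j => by simp only [hw i j]; congr 1; ring)] at h1
  have h2 := mul_le_mul_of_nonneg_left h1 (show 0 ≤ 1 / (4 * ε) by positivity)
  have h3 : ∑ i, d i * (1 - ∑ j ∈ G.neighborFinset i, pos (w i j - y i - y j) / ε)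
      = ∑ i, d i - (1 / ε) * ∑ i, d i * ∑ j ∈ G.neighborFinset i, pos (w i j - y i - y j) := by
    rw [Finset.mul_sum, ← Finset.sum_sub_distrib]
    refine Finset.sum_congr rfl fun i _ => ?_
    rw [← Finset.sum_div]; field_simp
  unfold penF
  rw [h3]
  simp only [Pi.add_apply, Finset.sum_add_distrib] at h2 ⊢
  have h4 : 1 / ε = 1 / (4 * ε) * 4 := by field_simp
  rw [h4]
  linarith

theorem lin_quad (s Q : ℝ) (h : ∀ t : ℝ, 0 ≤ t → t ≤ 1 → 0 ≤ t * s + t ^ 2 * Q) : 0 ≤ s := by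
  by_contra hs
  push Not at hs
  have hden : 0 < |Q| - s := by linarith [abs_nonneg Q]
  have h2 : (-s) / (2 * (|Q| - s)) ≤ 1 := by
    rw [div_le_one (by linarith)]; linarith [abs_nonneg Q]
  have h1 : 0 < (-s) / (2 * (|Q| - s)) := div_pos (by linarith) (by linarith)
  have h3 := h _ h1.le h2
  set t := (-s) / (2 * (|Q| - s)) with ht
  have h4 : t * (2 * (|Q| - s)) = -s := div_mul_cancel₀ _ (by positivity)
  have h5 : 0 ≤ t * (s + t * Q) := by linarith
  have h6 : 0 ≤ s + t * Q := nonneg_of_mul_nonneg_right h5 h1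
  have h7 : t * Q ≤ t * |Q| := mul_le_mul_of_nonneg_left (le_abs_self Q) h1.le
  nlinarith

theorem pen_exists (G : SimpleGraph V) [DecidableRel G.Adj] (w : V → V → ℝ)
    (hw : ∀ i j, w i j = w j i) (ε : ℝ) (hε : 0 < ε) :
    ∃ y : V → ℝ, (∀ i, 0 ≤ y i) ∧ (∀ i j, G.Adj i j → w i j ≤ y i + y j + ε) ∧
      ∃ x, LPFeasible G x ∧ ∑ i, y i ≤ LPval G w x := by
  have hsq : ∀ y : V → ℝ, ∑ i, y i ≤ penF G w ε y := by
    intro y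
    unfold penF
    have : 0 ≤ (1 / (4 * ε)) *
        ∑ i, ∑ j ∈ G.neighborFinset i, (pos (w i j - y i - y j)) ^ 2 := by positivity
    linarith
  set C := penF G w ε 0 with hC
  have hC0 : 0 ≤ C := by simpa using hsq 0
  have hcont : Continuous (penF G w ε) := by
    unfold penF pos
    fun_prop
  obtain ⟨y, hyK, hymin⟩ := (isCompact_Icc (a := (0 : V → ℝ)) (b := fun _ => C)).exists_isMinOn
    ⟨0, by simp [Pi.le_def, hC0]⟩ hcont.continuousOn
  have hy0 : ∀ i, 0 ≤ y i := hyK.1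
  have hmin : ∀ z : V → ℝ, (∀ i, 0 ≤ z i) → penF G w ε y ≤ penF G w ε z := by
    intro z hz
    by_cases hzC : z ≤ fun _ => C
    · exact hymin ⟨hz, hzC⟩
    · have h0 : penF G w ε y ≤ C := hymin ⟨le_rfl, fun _ => hC0⟩
      simp only [Pi.le_def, not_forall, not_le] at hzC
      obtain ⟨i, hi⟩ := hzC
      have := Finset.single_le_sum (f := z) (fun j _ => hz j) (Finset.mem_univ i)
      linarith [hsq z]
  set x : V → V → ℝ := fun i j => if G.Adj i j then pos (w i j - y i - y j) / ε else 0 with hx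
  have hxs : ∀ i, ∑ j ∈ G.neighborFinset i, x i j
      = ∑ j ∈ G.neighborFinset i, pos (w i j - y i - y j) / ε := by
    intro i
    refine Finset.sum_congr rfl fun j hj => ?_
    rw [SimpleGraph.mem_neighborFinset] at hj
    simp [hx, hj]
  have hdir : ∀ e : V → ℝ, (∀ t : ℝ, 0 ≤ t → t ≤ 1 → ∀ i, 0 ≤ y i + t * e i) →
      0 ≤ ∑ i, e i * (1 - ∑ j ∈ G.neighborFinset i, x i j) := by
    intro e he
    apply lin_quad _ ((1 / (4 * ε)) * ∑ i, ∑ j ∈ G.neighborFinset i, (e i + e j) ^ 2)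
    intro t ht0 ht1
    have h1 := hmin (y + t • e) (fun i => by simpa using he t ht0 ht1 i)
    have h2 := penF_dir G w hw ε hε y (t • e)
    simp only [Pi.smul_apply, smul_eq_mul, ← mul_add, mul_pow, ← Finset.mul_sum, mul_assoc] at h2
    simp only [hxs]
    have h3 : ∑ i, t * (e i * (1 - ∑ j ∈ G.neighborFinset i, pos (w i j - y i - y j) / ε))
      = t * ∑ i, (e i * (1 - ∑ j ∈ G.neighborFinset i, pos (w i j - y i - y j) / ε)) := by
      rw [Finset.mul_sum]
    linarith
  have hs0 : ∀ i, ∑ j ∈ G.neighborFinset i, x i j ≤ 1 := by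
    intro i
    have := hdir (Pi.single i 1) (fun t ht0 _ j => by
      have : (0 : ℝ) ≤ (Pi.single i 1 : V → ℝ) j := by
        rw [Pi.single_apply]; split_ifs <;> norm_num
      have := hy0 j
      positivity)
    simp [Pi.single_apply] at this
    linarith
  have hsy : ∑ i, y i ≤ ∑ i, y i * ∑ j ∈ G.neighborFinset i, x i j := by
    have := hdir (-y) (fun t ht0 ht1 j => by
      have := hy0 j
      simp only [Pi.neg_apply]
      nlinarith)
    simp only [Pi.neg_apply, mul_sub, mul_one, Finset.sum_sub_distrib, neg_mul,
      Finset.sum_neg_distrib] at this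
    linarith
  have hxnn : ∀ i j, 0 ≤ x i j := by
    intro i j
    simp only [hx]
    split_ifs
    · exact div_nonneg (pos_nonneg _) hε.le
    · exact le_rfl
  have hxsymm : ∀ i j, x i j = x j i := by
    intro i j
    simp only [hx, G.adj_comm i j, hw i j]
    congr 3; ring
  refine ⟨y, hy0, ?_, x, ⟨hxsymm, hxnn, ?_, hs0⟩, ?_⟩
  · intro i j hij
    have h1 := Finset.single_le_sum (f := x i) (fun j _ => hxnn i j)
      ((G.mem_neighborFinset i j).2 hij)
    have h2 : x i j ≤ 1 := h1.trans (hs0 i)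
    simp only [hx, hij, if_true] at h2
    rw [div_le_one hε] at h2
    linarith [le_pos (w i j - y i - y j)]
  · intro i j hij
    simp [hx, hij]
  · have h1 := sum_dd G y x hxsymm
    have h2 : ∑ i, ∑ j ∈ G.neighborFinset i, (y i + y j) * x i j
        ≤ ∑ i, ∑ j ∈ G.neighborFinset i, w i j * x i j := by
      refine Finset.sum_le_sum fun i _ => Finset.sum_le_sum fun j hj => ?_
      rw [SimpleGraph.mem_neighborFinset] at hj
      rcases le_total (w i j - y i - y j) 0 with h | h
      · have : x i j = 0 := by simp [hx, pos, max_eq_right h]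
        simp [this]
      · exact mul_le_mul_of_nonneg_right (by linarith) (hxnn i j)
    unfold LPval
    linarith

theorem dual_exists (G : SimpleGraph V) [DecidableRel G.Adj] (w : V → V → ℝ)
    (hw : ∀ i j, w i j = w j i) (P : ℝ) (hP : ∀ x, LPFeasible G x → LPval G w x ≤ P) :
    ∃ y : V → ℝ, (∀ i, 0 ≤ y i) ∧ (∀ i j, G.Adj i j → w i j ≤ y i + y j) ∧
      ∑ i, y i ≤ P := by
  have h : ∀ n : ℕ, ∃ y : V → ℝ, (∀ i, 0 ≤ y i) ∧
      (∀ i j, G.Adj i j → w i j ≤ y i + y j + 1 / ((n : ℝ) + 1)) ∧ ∑ i, y i ≤ P := by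
    intro n
    obtain ⟨y, h0, h1, x, hx, hxy⟩ := pen_exists G w hw (1 / ((n : ℝ) + 1)) (by positivity)
    exact ⟨y, h0, h1, hxy.trans (hP x hx)⟩
  choose z hz0 hz1 hz2 using h
  have hzK : ∀ n, z n ∈ Set.Icc (0 : V → ℝ) (fun _ => P) := fun n => ⟨hz0 n, fun i =>
    (Finset.single_le_sum (f := z n) (fun j _ => hz0 n j) (Finset.mem_univ i)).trans (hz2 n)⟩
  obtain ⟨y, hy, φ, hφ, hlim⟩ := isCompact_Icc.tendsto_subseq hzK
  have hli : ∀ i, Filter.Tendsto (fun n => z (φ n) i) Filter.atTop (nhds (y i)) :=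
    fun i => (tendsto_pi_nhds.1 hlim) i
  refine ⟨y, hy.1, ?_, ?_⟩
  · intro i j hij
    have h0 := (tendsto_one_div_add_atTop_nhds_zero_nat (𝕜 := ℝ)).comp hφ.tendsto_atTop
    have := ((hli i).add (hli j)).add h0
    rw [add_zero] at this
    exact ge_of_tendsto' this fun n => hz1 (φ n) i j hij
  · exact le_of_tendsto' (tendsto_finset_sum _ fun i _ => hli i) fun n => hz2 (φ n)

theorem nonexp_fixed {E : Type*} [NormedAddCommGroup E] [NormedSpace ℝ E] (K : Set E)
    (hK : IsCompact K) (hc : Convex ℝ K) (hne : K.Nonempty) (T : E → E)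
    (hT : ∀ x ∈ K, T x ∈ K) (hl : ∀ x ∈ K, ∀ y ∈ K, ‖T x - T y‖ ≤ ‖x - y‖) :
    ∃ x ∈ K, T x = x := by
  have hcont : ContinuousOn T K := by
    have : LipschitzOnWith 1 T K := by
      apply LipschitzOnWith.of_dist_le_mul
      intro x hx y hy
      simpa [dist_eq_norm] using hl x hx y hy
    exact this.continuousOn
  obtain ⟨x0, hx0, hmin⟩ := hK.exists_isMinOn hne ((hcont.sub continuousOn_id).norm)
  by_contra hcon
  push Not at hcon
  have hd : 0 < ‖T x0 - x0‖ := norm_pos_iff.2 (sub_ne_zero.2 (hcon x0 hx0))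
  set d := ‖T x0 - x0‖ with hdd
  set D := Metric.diam K with hD
  have hD0 : 0 ≤ D := Metric.diam_nonneg
  set l := D / (D + d) with hldef
  have hl0 : 0 ≤ l := by positivity
  have hl1 : l < 1 := by rw [hldef, div_lt_one (by positivity)]; linarith
  have hlD : (1 - l) * D < d := by
    have : 1 - l = d / (D + d) := by rw [hldef]; field_simp; ring
    rw [this, div_mul_eq_mul_div, div_lt_iff₀ (by positivity)]
    nlinarith
  have hfK : ∀ x ∈ K, (1 - l) • x0 + l • T x ∈ K := fun x hx =>
    hc hx0 (hT x hx) (by linarith) hl0 (by ring)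
  let f : K → K := fun x => ⟨(1 - l) • x0 + l • T x, hfK x x.2⟩
  haveI : CompactSpace K := isCompact_iff_compactSpace.1 hK
  haveI : Nonempty K := ⟨⟨x0, hx0⟩⟩
  have hf : ContractingWith ⟨l, hl0⟩ f := by
    refine ⟨by exact_mod_cast hl1, LipschitzWith.of_dist_le_mul fun x y => ?_⟩
    rw [Subtype.dist_eq, Subtype.dist_eq, dist_eq_norm, dist_eq_norm]
    have : (f x : E) - f y = l • (T x - T y) := by
      simp only [f, smul_sub]; abel
    rw [this, norm_smul, Real.norm_of_nonneg hl0]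
    exact mul_le_mul_of_nonneg_left (hl x x.2 y y.2) hl0
  obtain ⟨x, hx⟩ : ∃ x : K, f x = x := ⟨_, hf.fixedPoint_isFixedPt⟩
  have hx' : (1 - l) • x0 + l • T x = (x : E) := congrArg Subtype.val hx
  have h1 : d ≤ ‖T x - x‖ := hmin x.2
  have h2 : T x - x = (1 - l) • (T x - x0) := by
    nth_rewrite 2 [← hx']
    module
  rw [h2, norm_smul, Real.norm_of_nonneg (by linarith)] at h1
  have h3 : ‖T x - x0‖ ≤ D := by
    rw [← dist_eq_norm]
    exact Metric.dist_le_diam_of_mem hK.isBounded (hT x x.2) hx0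
  have := mul_le_mul_of_nonneg_left h3 (show 0 ≤ 1 - l by linarith)
  linarith

theorem fmax_bdd (s : Finset V) (f : V → ℝ) : BddAbove (Set.range fun k => ⨆ (_ : k ∈ s), f k) :=
  Set.finite_range _ |>.bddAbove

theorem le_fmax (s : Finset V) (f : V → ℝ) {k : V} (hk : k ∈ s) : f k ≤ fmax s f := by
  unfold fmax
  refine le_trans ?_ (le_ciSup (fmax_bdd s f) k)
  simp [hk]

theorem fmax_nonneg (s : Finset V) (f : V → ℝ) (hf : ∀ k, 0 ≤ f k) : 0 ≤ fmax s f :=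
  Real.iSup_nonneg fun k => Real.iSup_nonneg fun _ => hf k

theorem fmax_le (s : Finset V) (f : V → ℝ) (c : ℝ) (hc : 0 ≤ c) (h : ∀ k ∈ s, f k ≤ c) :
    fmax s f ≤ c :=
  Real.iSup_le (fun k => Real.iSup_le (fun hk => h k hk) hc) hc

theorem bestAlt_nonneg (G : SimpleGraph V) [DecidableRel G.Adj] (w : V → V → ℝ)
    (γ : V → ℝ) (i j : V) : 0 ≤ bestAlt G w γ i j :=
  fmax_nonneg _ _ fun _ => pos_nonneg _

theorem le_bestAlt (G : SimpleGraph V) [DecidableRel G.Adj] (w : V → V → ℝ)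
    (γ : V → ℝ) (i j k : V) (h : G.Adj i k) (hkj : k ≠ j) : w i k - γ k ≤ bestAlt G w γ i j :=
  (le_pos _).trans (le_fmax _ (fun k => pos (w i k - γ k)) (by simp [h, hkj]))

theorem bestAlt_lip1 (G : SimpleGraph V) [DecidableRel G.Adj] (w : V → V → ℝ)
    (γ γ' : V → ℝ) (i j : V) : bestAlt G w γ i j ≤ bestAlt G w γ' i j + ‖γ - γ'‖ := by
  apply fmax_le
  · exact add_nonneg (bestAlt_nonneg _ _ _ _ _) (norm_nonneg _)
  · intro k hk
    have h1 := le_fmax _ (fun k => pos (w i k - γ' k)) hk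
    have h2 := pos_sub_le (w i k - γ k) (w i k - γ' k)
    have h3 := norm_le_pi_norm (γ - γ') k
    have h4 : |w i k - γ k - (w i k - γ' k)| = ‖(γ - γ') k‖ := by
      rw [Real.norm_eq_abs, Pi.sub_apply, ← abs_neg]; congr 1; ring
    have h5 := le_abs_self (pos (w i k - γ k) - pos (w i k - γ' k))
    unfold bestAlt
    linarith

theorem bestAlt_lip (G : SimpleGraph V) [DecidableRel G.Adj] (w : V → V → ℝ)
    (γ γ' : V → ℝ) (i j : V) : |bestAlt G w γ i j - bestAlt G w γ' i j| ≤ ‖γ - γ'‖ := by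
  rw [abs_le]
  have h1 := bestAlt_lip1 G w γ γ' i j
  have h2 := bestAlt_lip1 G w γ' γ i j
  rw [norm_sub_rev] at h2
  constructor <;> linarith

theorem reb_matched (G : SimpleGraph V) [DecidableRel G.Adj] (w r : V → V → ℝ)
    (M : V → V → Prop) (hM : IsMatching G M) (γ : V → ℝ) (i j : V) (h : M i j) :
    reb G w r M γ i = bestAlt G w γ i j + r i j * surp G w γ i j := by
  have hex : ∃ j, M i j := ⟨j, h⟩
  have : hex.choose = j := hM.unique _ _ _ hex.choose_spec h
  unfold reb
  rw [dif_pos hex, this]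

theorem reb_unmatched (G : SimpleGraph V) [DecidableRel G.Adj] (w r : V → V → ℝ)
    (M : V → V → Prop) (γ : V → ℝ) (i : V) (h : ∀ j, ¬ M i j) :
    reb G w r M γ i = 0 := by
  unfold reb
  rw [dif_neg (by simpa using h)]

theorem reb_lip (G : SimpleGraph V) [DecidableRel G.Adj] (w r : V → V → ℝ)
    (hr : GoodR G r) (M : V → V → Prop) (hM : IsMatching G M) (γ γ' : V → ℝ) (i : V) :
    |reb G w r M γ i - reb G w r M γ' i| ≤ ‖γ - γ'‖ := by
  by_cases h : ∃ j, M i j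
  · obtain ⟨j, hj⟩ := h
    rw [reb_matched G w r M hM γ i j hj, reb_matched G w r M hM γ' i j hj]
    obtain ⟨r0, r1, -⟩ := hr i j (hM.subset _ _ hj)
    have h1 := abs_le.1 (bestAlt_lip G w γ γ' i j)
    have h2 := abs_le.1 (bestAlt_lip G w γ γ' j i)
    unfold surp
    rw [abs_le]
    constructor <;> nlinarith
  · push Not at h
    rw [reb_unmatched G w r M γ i h, reb_unmatched G w r M γ' i h]
    simp

theorem UD_of_stable (G : SimpleGraph V) [DecidableRel G.Adj]
    (w : V → V → ℝ) (hw : GoodW G w) (r : V → V → ℝ) (hr : GoodR G r)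
    (M : V → V → Prop) (γ0 : V → ℝ) (h0 : IsOutcome G w M γ0) (hs0 : Stable G w M γ0) :
    ∃ γ, IsUDSolution G w r M γ := by
  have hM := h0.1
  set K : Set (V → ℝ) := {γ | (∀ i, 0 ≤ γ i) ∧ (∀ i j, M i j → γ i + γ j = w i j) ∧
    (∀ i, (∀ j, ¬M i j) → γ i = 0) ∧ ∀ i j, G.Adj i j → ¬M i j → w i j ≤ γ i + γ j} with hKdef
  have hclosed : IsClosed K := by
    simp only [hKdef, Set.setOf_and, Set.setOf_forall]
    refine IsClosed.inter ?_ (IsClosed.inter ?_ (IsClosed.inter ?_ ?_))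
    · exact isClosed_iInter fun i => isClosed_le continuous_const (continuous_apply i)
    · exact isClosed_iInter fun i => isClosed_iInter fun j => isClosed_iInter fun _ =>
        isClosed_eq ((continuous_apply i).add (continuous_apply j)) continuous_const
    · exact isClosed_iInter fun i => isClosed_iInter fun _ =>
        isClosed_eq (continuous_apply i) continuous_const
    · exact isClosed_iInter fun i => isClosed_iInter fun j => isClosed_iInter fun _ =>
        isClosed_iInter fun _ =>
        isClosed_le continuous_const ((continuous_apply i).add (continuous_apply j))
  have hsub : K ⊆ Set.Icc 0 (fun i => ∑ j, |w i j|) := by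
    rintro γ ⟨g0, g1, g2, -⟩
    refine ⟨g0, fun i => ?_⟩
    by_cases h : ∃ j, M i j
    · obtain ⟨j, hj⟩ := h
      have h1 := Finset.single_le_sum (f := fun j => |w i j|) (fun j _ => abs_nonneg _)
        (Finset.mem_univ j)
      have h2 := le_abs_self (w i j)
      have h3 := g1 i j hj
      have h4 := g0 j
      simp only at h1 ⊢
      linarith
    · push Not at h
      rw [g2 i h]
      exact Finset.sum_nonneg fun _ _ => abs_nonneg _
  have hcomp : IsCompact K := isCompact_Icc.of_isClosed_subset hclosed hsub
  have hconv : Convex ℝ K := by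
    rintro γ ⟨g0, g1, g2, g3⟩ δ ⟨d0, d1, d2, d3⟩ a b ha hb hab
    refine ⟨fun i => ?_, fun i j hij => ?_, fun i hi => ?_, fun i j hij hm => ?_⟩ <;>
      simp only [Pi.add_apply, Pi.smul_apply, smul_eq_mul]
    · have := g0 i; have := d0 i; positivity
    · have e1 := g1 i j hij
      have e2 := d1 i j hij
      calc _ = a * (γ i + γ j) + b * (δ i + δ j) := by ring
        _ = (a + b) * w i j := by rw [e1, e2]; ring
        _ = _ := by rw [hab, one_mul]
    · simp [g2 i hi, d2 i hi]
    · have e1 := mul_le_mul_of_nonneg_left (g3 i j hij hm) ha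
      have e2 := mul_le_mul_of_nonneg_left (d3 i j hij hm) hb
      have e3 : w i j = a * w i j + b * w i j := by rw [← add_mul, hab, one_mul]
      linarith
  have hsurp : ∀ γ i j, surp G w γ i j = surp G w γ j i := by
    intro γ i j
    unfold surp
    rw [hw.1 i j]; ring
  have hbest : ∀ γ ∈ K, ∀ i j, M i j → bestAlt G w γ i j ≤ γ i := by
    rintro γ ⟨g0, g1, g2, g3⟩ i j hij
    apply fmax_le _ _ _ (g0 i)
    intro k hk
    simp only [Finset.mem_erase, SimpleGraph.mem_neighborFinset] at hk
    have := g3 i k hk.2 (fun h => hk.1 (hM.unique _ _ _ h hij))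
    exact max_le (by linarith) (g0 i)
  have hrebbest : ∀ γ ∈ K, ∀ i j, M i j → bestAlt G w γ i j ≤ reb G w r M γ i := by
    intro γ hγ i j hij
    rw [reb_matched G w r M hM γ i j hij]
    have h1 := hbest γ hγ i j hij
    have h2 := hbest γ hγ j i (hM.symm _ _ hij)
    have h3 := hγ.2.1 i j hij
    have h4 : 0 ≤ surp G w γ i j := by unfold surp; linarith
    have h5 := (hr i j (hM.subset _ _ hij)).1
    have := mul_nonneg h5.le h4
    linarith
  have hrebalt : ∀ γ ∈ K, ∀ i k, G.Adj i k → ¬ M i k → w i k - γ k ≤ reb G w r M γ i := by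
    intro γ hγ i k hik hm
    by_cases h : ∃ j, M i j
    · obtain ⟨j, hj⟩ := h
      exact (le_bestAlt G w γ i j k hik (fun e => hm (e ▸ hj))).trans (hrebbest γ hγ i j hj)
    · push Not at h
      rw [reb_unmatched G w r M γ i h]
      have h1 := hγ.2.2.2 i k hik hm
      have h2 := hγ.2.2.1 i h
      linarith
  obtain ⟨γ, hγ, hfix⟩ := nonexp_fixed K hcomp hconv ⟨γ0, h0.2.1, h0.2.2.1, h0.2.2.2, hs0⟩
    (fun γ i => (γ i + reb G w r M γ i) / 2)
    (by
      intro γ hγ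
      refine ⟨fun i => ?_, fun i j hij => ?_, fun i hi => ?_, fun i j hij hm => ?_⟩ <;>
        simp only
      · have h1 := hγ.1 i
        have h2 : 0 ≤ reb G w r M γ i := by
          by_cases h : ∃ j, M i j
          · obtain ⟨j, hj⟩ := h
            exact (bestAlt_nonneg G w γ i j).trans (hrebbest γ hγ i j hj)
          · push Not at h
            rw [reb_unmatched G w r M γ i h]
        positivity
      · have hji := hM.symm _ _ hij
        rw [reb_matched G w r M hM γ i j hij, reb_matched G w r M hM γ j i hji, hsurp γ j i]
        have h1 := (hr i j (hM.subset _ _ hij)).2.2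
        have h2 : r j i = 1 - r i j := by linarith
        have h3 := hγ.2.1 i j hij
        rw [h2]
        have h4 : surp G w γ i j = w i j - bestAlt G w γ i j - bestAlt G w γ j i := rfl
        linarith
      · rw [reb_unmatched G w r M γ i hi, hγ.2.2.1 i hi]; simp
      · have h1 := hrebalt γ hγ i j hij hm
        have h2 := hrebalt γ hγ j i hij.symm (fun h => hm (hM.symm _ _ h))
        rw [hw.1 j i] at h2
        linarith)
    (by
      intro γ _ δ _
      rw [pi_norm_le_iff_of_nonneg (norm_nonneg _)]
      intro i
      have h1 := abs_le.1 (reb_lip G w r hr M hM γ δ i)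
      have h2 := norm_le_pi_norm (γ - δ) i
      rw [Real.norm_eq_abs, Pi.sub_apply] at h2
      have h3 := abs_le.1 h2
      rw [Real.norm_eq_abs, Pi.sub_apply, abs_le]
      constructor <;> linarith)
  refine ⟨γ, ⟨hM, hγ.1, hγ.2.1, hγ.2.2.1⟩, hγ.2.2.2, ?_⟩
  have hfix' : ∀ i j, M i j → γ i - bestAlt G w γ i j = r i j * surp G w γ i j := by
    intro i j hij
    have h1 := congrFun hfix i
    rw [reb_matched G w r M hM γ i j hij] at h1
    linarith
  intro i j hij
  have hji := hM.symm _ _ hij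
  have hi := (hr i j (hM.subset _ _ hij)).1
  have hj := (hr j i (hM.subset _ _ hji)).1
  rw [hfix' i j hij, hfix' j i hji, hsurp γ j i]
  field_simp

theorem weak_dual (G : SimpleGraph V) [DecidableRel G.Adj] (w x : V → V → ℝ) (γ : V → ℝ)
    (hx : LPFeasible G x) (h0 : ∀ i, 0 ≤ γ i) (h1 : ∀ i j, G.Adj i j → w i j ≤ γ i + γ j) :
    LPval G w x ≤ ∑ i, γ i := by
  have e := sum_dd G γ x hx.1
  have h2 : ∑ i, ∑ j ∈ G.neighborFinset i, w i j * x i j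
      ≤ ∑ i, ∑ j ∈ G.neighborFinset i, (γ i + γ j) * x i j := by
    refine Finset.sum_le_sum fun i _ => Finset.sum_le_sum fun j hj => ?_
    rw [SimpleGraph.mem_neighborFinset] at hj
    exact mul_le_mul_of_nonneg_right (h1 i j hj) (hx.2.1 i j)
  have h3 : ∑ i, γ i * ∑ j ∈ G.neighborFinset i, x i j ≤ ∑ i, γ i :=
    Finset.sum_le_sum fun i _ => mul_le_of_le_one_right (h0 i) (hx.2.2.2 i)
  unfold LPval
  linarith

theorem LP_of_stable (G : SimpleGraph V) [DecidableRel G.Adj]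
    (w : V → V → ℝ) (M : V → V → Prop) (γ : V → ℝ)
    (h : IsOutcome G w M γ) (hs : Stable G w M γ) :
    ∃ x : V → V → ℝ, LPOptimal G w x ∧ Integral x := by
  classical
  obtain ⟨hM, g0, g1, g2⟩ := h
  have hdual : ∀ i j, G.Adj i j → w i j ≤ γ i + γ j := by
    intro i j hij
    by_cases hm : M i j
    · exact (g1 i j hm).ge
    · exact hs i j hij hm
  have hsum : ∀ i j, M i j → ∑ k ∈ G.neighborFinset i, mInd M i k = 1 := by
    intro i j hij
    rw [Finset.sum_eq_single j]
    · simp [mInd, hij]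
    · intro k _ hk
      have : ¬ M i k := fun h => hk (hM.unique _ _ _ h hij)
      simp [mInd, this]
    · intro hj
      exact absurd ((G.mem_neighborFinset i j).2 (hM.subset _ _ hij)) hj
  have hsum0 : ∀ i, (∀ j, ¬ M i j) → ∑ k ∈ G.neighborFinset i, mInd M i k = 0 := by
    intro i hi
    exact Finset.sum_eq_zero fun k _ => by simp [mInd, hi k]
  have hsymm : ∀ i j, mInd M i j = mInd M j i := by
    intro i j
    have : M i j ↔ M j i := ⟨hM.symm i j, hM.symm j i⟩
    simp [mInd, this]
  have hf : LPFeasible G (mInd M) := by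
    refine ⟨hsymm, fun i j => ?_, fun i j hij => ?_, fun i => ?_⟩
    · unfold mInd; split_ifs <;> norm_num
    · have : ¬ M i j := fun h => hij (hM.subset _ _ h)
      simp [mInd, this]
    · by_cases h : ∃ j, M i j
      · obtain ⟨j, hj⟩ := h
        rw [hsum i j hj]
      · push Not at h
        rw [hsum0 i h]; norm_num
  refine ⟨mInd M, ⟨hf, fun y hy => ?_⟩, fun i j => ?_⟩
  · refine (weak_dual G w y γ hy g0 hdual).trans ?_
    have e := sum_dd G γ (mInd M) hsymm
    have e1 : ∑ i, ∑ j ∈ G.neighborFinset i, w i j * mInd M i j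
      = ∑ i, ∑ j ∈ G.neighborFinset i, (γ i + γ j) * mInd M i j := by
      refine Finset.sum_congr rfl fun i _ => Finset.sum_congr rfl fun j _ => ?_
      by_cases hm : M i j
      · rw [g1 i j hm]
      · simp [mInd, hm]
    have e2 : ∑ i, γ i * ∑ j ∈ G.neighborFinset i, mInd M i j = ∑ i, γ i := by
      refine Finset.sum_congr rfl fun i _ => ?_
      by_cases h : ∃ j, M i j
      · obtain ⟨j, hj⟩ := h
        rw [hsum i j hj, mul_one]
      · push Not at h
        rw [hsum0 i h, g2 i h]; simp
    unfold LPval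
    linarith
  · unfold mInd; split_ifs <;> simp

theorem stable_of_LP (G : SimpleGraph V) [DecidableRel G.Adj]
    (w : V → V → ℝ) (hw : GoodW G w) (x : V → V → ℝ)
    (hx : LPOptimal G w x) (hi : Integral x) :
    ∃ (M : V → V → Prop) (γ : V → ℝ), IsOutcome G w M γ ∧ Stable G w M γ := by
  obtain ⟨y, y0, y1, y2⟩ := dual_exists G w hw.1 (LPval G w x) hx.2
  obtain ⟨⟨x0, x1, x2, x3⟩, -⟩ := hx
  have e := sum_dd G y x x0
  have t2 : ∀ i, y i * ∑ j ∈ G.neighborFinset i, x i j ≤ y i :=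
    fun i => mul_le_of_le_one_right (y0 i) (x3 i)
  have t1 : ∀ i, ∀ j ∈ G.neighborFinset i, w i j * x i j ≤ (y i + y j) * x i j := by
    intro i j hj
    rw [SimpleGraph.mem_neighborFinset] at hj
    exact mul_le_mul_of_nonneg_right (y1 i j hj) (x1 i j)
  have s1 : ∑ i, ∑ j ∈ G.neighborFinset i, w i j * x i j
      ≤ ∑ i, ∑ j ∈ G.neighborFinset i, (y i + y j) * x i j :=
    Finset.sum_le_sum fun i _ => Finset.sum_le_sum (t1 i)
  have s2 : ∑ i, y i * ∑ j ∈ G.neighborFinset i, x i j ≤ ∑ i, y i :=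
    Finset.sum_le_sum fun i _ => t2 i
  unfold LPval at y2
  have q1 : ∑ i, ∑ j ∈ G.neighborFinset i, w i j * x i j
      = ∑ i, ∑ j ∈ G.neighborFinset i, (y i + y j) * x i j := by linarith
  have q2 : ∑ i, y i * ∑ j ∈ G.neighborFinset i, x i j = ∑ i, y i := by linarith
  have q1' := (Finset.sum_eq_sum_iff_of_le fun i _ => Finset.sum_le_sum (t1 i)).1 q1
  have q2' := (Finset.sum_eq_sum_iff_of_le fun i _ => t2 i).1 q2
  have hadj : ∀ i j, x i j = 1 → G.Adj i j := by
    intro i j h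
    by_contra hn
    rw [x2 i j hn] at h
    norm_num at h
  refine ⟨fun i j => x i j = 1, y, ⟨⟨hadj, fun i j h => by rw [x0, h], ?_⟩, y0, ?_, ?_⟩, ?_⟩
  · intro i j k hj hk
    by_contra hjk
    have h1 := Finset.sum_le_sum_of_subset_of_nonneg (f := x i)
      (s := {j, k}) (t := G.neighborFinset i)
      (by
        intro l hl
        simp only [Finset.mem_insert, Finset.mem_singleton] at hl
        rw [SimpleGraph.mem_neighborFinset]
        rcases hl with rfl | rfl
        · exact hadj _ _ hj
        · exact hadj _ _ hk)
      (fun l _ _ => x1 i l)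
    rw [Finset.sum_pair hjk, hj, hk] at h1
    linarith [x3 i]
  · intro i j hij
    have := (Finset.sum_eq_sum_iff_of_le (t1 i)).1 (q1' i (Finset.mem_univ i)) j
      ((G.mem_neighborFinset i j).2 (hadj _ _ hij))
    rw [hij] at this
    linarith
  · intro i hm
    have := q2' i (Finset.mem_univ i)
    rw [Finset.sum_eq_zero (fun j _ => (hi i j).resolve_right (hm j))] at this
    linarith
  · intro i j hij _
    exact y1 i j hij

/-- A UD solution exists iff a stable trade outcome exists, iff
the LP relaxation of maximum weight matching admits an integral optimum. -/
theorem UD_solution_existence_iff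
    {V : Type*} [Fintype V] [DecidableEq V] (G : SimpleGraph V) [DecidableRel G.Adj]
    (w : V → V → ℝ) (hw : GoodW G w) (r : V → V → ℝ) (hr : GoodR G r) :
    ((∃ (M : V → V → Prop) (γ : V → ℝ), IsUDSolution G w r M γ) ↔
      (∃ (M : V → V → Prop) (γ : V → ℝ), IsOutcome G w M γ ∧ Stable G w M γ)) ∧
    ((∃ (M : V → V → Prop) (γ : V → ℝ), IsOutcome G w M γ ∧ Stable G w M γ) ↔
      ∃ x : V → V → ℝ, LPOptimal G w x ∧ Integral x) := by
  refine ⟨⟨?_, ?_⟩, ⟨?_, ?_⟩⟩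
  · rintro ⟨M, γ, h⟩
    exact ⟨M, γ, h.1, h.2.1⟩
  · rintro ⟨M, γ, h, hs⟩
    exact ⟨M, UD_of_stable G w hw r hr M γ h hs⟩
  · rintro ⟨M, γ, h, hs⟩
    exact LP_of_stable G w M γ h hs
  · rintro ⟨x, hx, hi⟩
    exact stable_of_LP G w hw x hx hi
end EN
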